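/- Let λ_1, …, λ_{2n} be positive reals with λ_{2k−1} λ_{2k} = 1 for k = 1, …, n, and suppose 1/2^n − ε ≤ 1/√(∏_{i=1}^{2n}(1 + λ_i²)) for some 0 < ε < 1/2^n. Then 1/√Λ' ≤ λ_i ≤ √Λ' for all i = 1, …, 2n, where Λ' = (r + √(r² − 1))² with r = (1/2^n)/(1/2^n − ε) > 1. -/

import Mathlib

open Finset

/-!
If `a * b = 1` then `(1 + a²) * (1 + b²) = (a + b)²`, so the square root of the full product is
`∏ₖ (aₖ + bₖ)` over the pairs (`sqrt_prod_eq`). Each factor is at least `2`, hence for every `j` the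
product is at least `(aⱼ + bⱼ) * 2 ^ (n - 1)`, and the hypothesis becomes `aⱼ + bⱼ ≤ 2 r`.
As `bⱼ = 1 / aⱼ`, this is the quadratic inequality `(aⱼ - r)² ≤ r² - 1`, which gives the upper
bound `r + √(r² - 1)` for both members of the pair, and so the lower bound by inversion.
-/

/-- The product over `Fin (2 * n)` grouped into consecutive pairs; `e₀` and `e₁` are the index maps
`k ↦ 2 k` and `k ↦ 2 k + 1`, characterised by their values. -/
lemma prod_fin_two_mul (n : ℕ) (e₀ e₁ : Fin n → Fin (2 * n)) (h₀ : ∀ k, (e₀ k : ℕ) = 2 * k)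
    (h₁ : ∀ k, (e₁ k : ℕ) = 2 * k + 1) (f : Fin (2 * n) → ℝ) :
    ∏ i, f i = ∏ k : Fin n, f (e₀ k) * f (e₁ k) := by
  rw [← (finProdFinEquiv.trans (finCongr (mul_comm n 2))).prod_comp, Fintype.prod_prod_type]
  refine Finset.prod_congr rfl fun k _ => ?_
  rw [Fin.prod_univ_two]
  congr 2 <;> ext <;> simp [finProdFinEquiv, h₀, h₁, add_comm]

lemma sqrt_prod_eq (n : ℕ) (e₀ e₁ : Fin n → Fin (2 * n)) (h₀ : ∀ k, (e₀ k : ℕ) = 2 * k)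
    (h₁ : ∀ k, (e₁ k : ℕ) = 2 * k + 1) (lam : Fin (2 * n) → ℝ) (hpos : ∀ i, 0 < lam i)
    (hpair : ∀ k, lam (e₀ k) * lam (e₁ k) = 1) :
    Real.sqrt (∏ i, (1 + lam i ^ 2)) = ∏ k : Fin n, (lam (e₀ k) + lam (e₁ k)) := by
  rw [prod_fin_two_mul n e₀ e₁ h₀ h₁, Real.sqrt_eq_iff_mul_self_eq_of_pos,
    ← Finset.prod_mul_distrib]
  · refine Finset.prod_congr rfl fun k _ => ?_
    linear_combination (-(lam (e₀ k) * lam (e₁ k)) + 1) * hpair k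
  · exact Finset.prod_pos fun k _ => add_pos (hpos _) (hpos _)

lemma le_root_of_add_le {x y r : ℝ} (hx : 0 < x) (hxy : x * y = 1) (h : x + y ≤ 2 * r) :
    x ≤ r + Real.sqrt (r ^ 2 - 1) := by
  have h1 : (x - r) ^ 2 ≤ r ^ 2 - 1 := by nlinarith [mul_le_mul_of_nonneg_left h hx.le]
  linarith [le_abs_self (x - r), Real.abs_le_sqrt h1]

lemma pinch_of_add_le {x y r : ℝ} (hx : 0 < x) (hy : 0 < y) (hxy : x * y = 1)
    (h : x + y ≤ 2 * r) :
    1 / (r + Real.sqrt (r ^ 2 - 1)) ≤ x ∧ x ≤ r + Real.sqrt (r ^ 2 - 1) := by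
  refine ⟨?_, le_root_of_add_le hx hxy h⟩
  have hy' := le_root_of_add_le hy (by rwa [mul_comm]) (by rwa [add_comm])
  rw [div_le_iff₀ (hy.trans_le hy')]
  exact hxy.ge.trans (mul_le_mul_of_nonneg_left hy' hx.le)

/-- Conversely, a lower bound `1/2^n − ε ≤ 1/√(∏ (1+λ_i²))` with
`0 < ε < 1/2^n` forces `1/√Λ' ≤ λ_i ≤ √Λ'` for all `i`, where
`Λ' = (r + √(r²−1))²` and `r = (1/2^n)/(1/2^n − ε) > 1`. -/
theorem pinching_from_jacobian_lower_bound (n : ℕ) (lam : Fin (2 * n) → ℝ)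
    (hpos : ∀ i, 0 < lam i)
    (hpair : ∀ k : Fin n, lam ⟨2 * (k : ℕ), by have := k.isLt; omega⟩ *
      lam ⟨2 * (k : ℕ) + 1, by have := k.isLt; omega⟩ = 1)
    (ε : ℝ) (hε0 : 0 < ε) (hε1 : ε < 1 / 2 ^ n)
    (hlb : 1 / (2 : ℝ) ^ n - ε ≤ 1 / Real.sqrt (∏ i, (1 + lam i ^ 2))) :
    1 < (1 / (2 : ℝ) ^ n) / (1 / (2 : ℝ) ^ n - ε) ∧
    ∀ i, 1 / Real.sqrt (((1 / (2 : ℝ) ^ n) / (1 / (2 : ℝ) ^ n - ε) +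
        Real.sqrt (((1 / (2 : ℝ) ^ n) / (1 / (2 : ℝ) ^ n - ε)) ^ 2 - 1)) ^ 2) ≤ lam i ∧
      lam i ≤ Real.sqrt (((1 / (2 : ℝ) ^ n) / (1 / (2 : ℝ) ^ n - ε) +
        Real.sqrt (((1 / (2 : ℝ) ^ n) / (1 / (2 : ℝ) ^ n - ε)) ^ 2 - 1)) ^ 2) := by
  have hp : (0 : ℝ) < 2 ^ n := by positivity
  have hd : 0 < 1 / (2 : ℝ) ^ n - ε := sub_pos.mpr hε1
  have hr : 1 < (1 / (2 : ℝ) ^ n) / (1 / (2 : ℝ) ^ n - ε) := by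
    rw [lt_div_iff₀ hd]; linarith
  refine ⟨hr, ?_⟩
  rw [sqrt_prod_eq n _ _ (fun _ => rfl) (fun _ => rfl) lam hpos hpair] at hlb
  set d := 1 / (2 : ℝ) ^ n - ε with hd_def
  set r := (1 / (2 : ℝ) ^ n) / d with hr_def
  rw [Real.sqrt_sq (add_nonneg (by linarith) (Real.sqrt_nonneg _))]
  set c : Fin n → ℝ := fun k => lam ⟨2 * (k : ℕ), by have := k.isLt; omega⟩ +
        lam ⟨2 * (k : ℕ) + 1, by have := k.isLt; omega⟩ with hc_def
  have hc2 : ∀ k, 2 ≤ c k := by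
    intro k
    have h := hpair k
    have h1 := hpos ⟨2 * (k : ℕ), by have := k.isLt; omega⟩
    have h2 := hpos ⟨2 * (k : ℕ) + 1, by have := k.isLt; omega⟩
    simp only [hc_def]
    nlinarith [sq_nonneg (lam ⟨2 * (k : ℕ), by have := k.isLt; omega⟩ -
        lam ⟨2 * (k : ℕ) + 1, by have := k.isLt; omega⟩)]
  have hprod : ∏ k, c k ≤ 2 ^ n * r := by
    have hcp : 0 < ∏ k, c k := Finset.prod_pos fun k _ => by linarith [hc2 k]
    have h1 : 2 ^ n * r = 1 / d := by rw [hr_def]; field_simp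
    rw [h1, le_div_iff₀ hd, mul_comm]
    exact (le_div_iff₀ hcp).mp hlb
  have hc : ∀ j, c j ≤ 2 * r := by
    intro j
    -- Halving each factor leaves factors `≥ 1`, so a single one is bounded by the product.
    have h1 : c j / 2 ≤ ∏ k, c k / 2 := by
      rw [← Finset.mul_prod_erase _ _ (Finset.mem_univ j)]
      refine le_mul_of_one_le_right (by linarith [hc2 j]) ?_
      exact Finset.one_le_prod fun k _ => by linarith [hc2 k]
    rw [Finset.prod_div_distrib, Finset.prod_const, Finset.card_univ, Fintype.card_fin] at h1
    have h2 : (∏ k, c k) / 2 ^ n ≤ r := by rw [div_le_iff₀ hp]; linarith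
    linarith
  intro i
  obtain ⟨k, hk⟩ : ∃ k : Fin n, (i : ℕ) = 2 * (k : ℕ) ∨ (i : ℕ) = 2 * (k : ℕ) + 1 :=
    ⟨⟨i / 2, by have := i.isLt; omega⟩, by simp only; omega⟩
  have hck := hc k
  have hpk := hpair k
  rcases hk with hk | hk
  · have hi : i = ⟨2 * (k : ℕ), by have := k.isLt; omega⟩ := Fin.ext hk
    rw [hi]
    exact pinch_of_add_le (hpos _) (hpos _) hpk hck
  · have hi : i = ⟨2 * (k : ℕ) + 1, by have := k.isLt; omega⟩ := Fin.ext hk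
    rw [hi]
    exact pinch_of_add_le (hpos _) (hpos _) (by rwa [mul_comm]) (by rwa [add_comm])
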